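/- Let S and T be totally irreducible d-by-d integer matrix automorphisms of the d-dimensional torus with equal weak stable subspaces V_S^{0-} = V_T^{0-}, and suppose gcd(d, dim V_S^{0-}) = 1 (with 0 < dim V_S^{0-} < d). Then S and T commute. -/

import Mathlib

/-- The weak stable subspace `V_S^{0-}` of an integer matrix `S`, i.e. the sum of the
generalized real eigenspaces for eigenvalues of modulus at most `1`.  For diagonalizable
matrices this is exactly the set of vectors with bounded forward orbit, which is how we
formalize it. -/
noncomputable def weakStableSubspace (d : ℕ) (A : Matrix (Fin d) (Fin d) ℤ) :
    Submodule ℝ (Fin d → ℝ) :=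
  Submodule.span ℝ
    {v : Fin d → ℝ | ∃ C : ℝ, ∀ n : ℕ, ‖((A.map (Int.cast : ℤ → ℝ)) ^ n).mulVec v‖ ≤ C}

/-!
Let `A` be the algebra of rational `d × d` matrices preserving `V = V_S^{0-}`, so that `S, T ∈ A`.
Irreducibility of the characteristic polynomial of `S` makes `ℚ^d` a simple `A`-module, so by Schur
and Jacobson `D = End_A(ℚ^d)` is a division ring and `A = End_D(ℚ^d)` is a matrix ring of size
`m = dim_D ℚ^d`. Every module over an `m × m` matrix ring is an `m`-fold power, hence `m` divides
the dimension of every representation of `A`, in particular `d` and `dim V`. By coprimality `m = 1`,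
so some `g ∈ D` maps a nonzero vector `x` to `S x`. As `g` and `S` commute and agree at the cyclic
vector `x`, they are equal; thus `S ∈ D` commutes with `A`, and in particular with `T`.
-/

open Module
open scoped Matrix

section MatrixRing

variable {n R F W : Type*} [Fintype n] [DecidableEq n] [Semiring R]

section Equiv

variable [Semiring F] [AddCommMonoid W] [Module F W]

theorem map_single_apply_map_single_apply (f : Matrix n n R →+* Module.End F W) (i j l : n)
    (w : W) : f (Matrix.single i j 1) (f (Matrix.single j l 1) w) = f (Matrix.single i l 1) w := by
  rw [← Module.End.mul_apply, ← map_mul, Matrix.single_mul_single_same, one_mul]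

/-- A space `W` on which a matrix ring acts is the `n`-fold power of the range of the `i`-th
diagonal matrix unit `eᵢᵢ`: the `j`-th coordinate of `w` is `eᵢⱼ w`. -/
def linearEquivPiRangeSingle (f : Matrix n n R →+* Module.End F W) (i : n) :
    W ≃ₗ[F] (n → LinearMap.range (f (Matrix.single i i 1))) where
  toFun w j := ⟨f (Matrix.single i j 1) w, f (Matrix.single i j 1) w,
    map_single_apply_map_single_apply f i i j w⟩
  map_add' _ _ := by ext; simp
  map_smul' _ _ := by ext; simp
  invFun v := ∑ j, f (Matrix.single j i 1) (v j)
  left_inv w := by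
    simp only [map_single_apply_map_single_apply, ← LinearMap.sum_apply, ← map_sum,
      Matrix.sum_single_one, map_one, Module.End.one_apply]
  right_inv v := by
    ext l
    obtain ⟨w, hw⟩ := (v l).2
    calc f (Matrix.single i l 1) (∑ j, f (Matrix.single j i 1) (v j))
        = ∑ j, f (Matrix.single i l 1 * Matrix.single j i 1) (v j) := by
          simp only [map_sum, map_mul, Module.End.mul_apply]
      _ = f (Matrix.single i l 1 * Matrix.single l i 1) (v l) :=
          Finset.sum_eq_single_of_mem l (Finset.mem_univ l) fun j _ hj => by
            rw [Matrix.single_mul_single_of_ne _ _ _ _ hj.symm, map_zero, LinearMap.zero_apply]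
      _ = v l := by
          rw [Matrix.single_mul_single_same, one_mul, ← hw,
            map_single_apply_map_single_apply]

end Equiv

theorem card_dvd_finrank_of_matrix_ringHom [DivisionRing F] [AddCommGroup W] [Module F W]
    (f : Matrix n n R →+* Module.End F W) : Fintype.card n ∣ finrank F W := by
  cases isEmpty_or_nonempty n with
  | inl _ =>
    have : Subsingleton (Module.End F W) := f.codomain_trivial
    have : Subsingleton W := subsingleton_of_forall_eq 0 fun w =>
      LinearMap.congr_fun (Subsingleton.elim (1 : Module.End F W) 0) w
    simp only [finrank_zero_of_subsingleton, dvd_zero]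
  | inr hn =>
    obtain ⟨i⟩ := hn
    refine ⟨finrank F (LinearMap.range (f (Matrix.single i i 1))), ?_⟩
    rw [(linearEquivPiRangeSingle f i).finrank_eq]
    simp [finrank]

end MatrixRing

theorem finrank_dvd_finrank_of_moduleEnd_ringHom {K M F W : Type*} [Ring K]
    [StrongRankCondition K] [AddCommGroup M] [Module K M] [Module.Free K M] [Module.Finite K M]
    [DivisionRing F] [AddCommGroup W] [Module F W] (f : Module.End K M →+* Module.End F W) :
    finrank K M ∣ finrank F W := by
  let e : Module.End K M ≃+* Matrix (Fin (finrank K M)) (Fin (finrank K M)) (Module.End K K) :=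
    (finBasis K M).equivFun.conjRingEquiv.trans (endVecRingEquivMatrixEnd _ _ K)
  simpa only [Fintype.card_fin] using
    card_dvd_finrank_of_matrix_ringHom (f.comp e.symm.toRingHom)

theorem finrank_moduleEnd_dvd_finrank_of_ringHom {A M F W : Type*} [Ring A] [AddCommGroup M]
    [Module A M] [FaithfulSMul A M] [IsSimpleModule A M] [Module.Finite (Module.End A M) M]
    [DivisionRing F] [AddCommGroup W] [Module F W] (f : A →+* Module.End F W) :
    finrank (Module.End A M) M ∣ finrank F W := by
  classical
  have faithful : Function.Injective (Module.toModuleEnd (Module.End A M) (S := A) M) :=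
    fun _ _ hab => FaithfulSMul.eq_of_smul_eq_smul fun x => LinearMap.congr_fun hab x
  let e : A ≃+* Module.End (Module.End A M) M :=
    RingEquiv.ofBijective _ ⟨faithful, Module.Finite.toModuleEnd_moduleEnd_surjective⟩
  exact finrank_dvd_finrank_of_moduleEnd_ringHom (f.comp e.symm.toRingHom)

section InvtSubalgebra

variable {R M : Type*} [CommSemiring R] [AddCommMonoid M] [Module R M]

/-- The algebra of endomorphisms preserving the submodule `N`, i.e. the largest algebra of
endomorphisms having `N` as a subrepresentation. -/
def invtSubalgebra (N : Submodule R M) : Subalgebra R (Module.End R M) where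
  carrier := {a | N ∈ a.invtSubmodule}
  mul_mem' ha hb := fun _ hx => ha (hb hx)
  add_mem' ha hb := fun _ hx => N.add_mem (ha hx) (hb hx)
  algebraMap_mem' r := fun _ hx => N.smul_mem r hx

/-- The representation of `invtSubalgebra N` on `N` by restriction. -/
def invtSubalgebra.restrict (N : Submodule R M) : invtSubalgebra N →ₐ[R] Module.End R N where
  toFun a := a.1.restrict a.2
  map_one' := rfl
  map_mul' _ _ := rfl
  map_zero' := rfl
  map_add' _ _ := rfl
  commutes' _ := rfl

end InvtSubalgebra

section IrreducibleCharpoly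

open Polynomial

variable {k M : Type*} [Field k] [AddCommGroup M] [Module k M] [Module.Finite k M]
  {s : Module.End k M}

theorem nontrivial_of_irreducible_charpoly (hs : Irreducible s.charpoly) : Nontrivial M :=
  Module.nontrivial_of_finrank_pos (R := k) (s.charpoly_natDegree ▸ hs.natDegree_pos)

theorem eq_top_of_irreducible_charpoly (hs : Irreducible s.charpoly) {N : Submodule k M}
    (hN : N ∈ s.invtSubmodule) (hN₀ : N ≠ ⊥) : N = ⊤ := by
  have := Submodule.nontrivial_iff_ne_bot.mpr hN₀
  let a : invtSubalgebra N := ⟨s, hN⟩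
  have aeval_restrict : aeval (invtSubalgebra.restrict N a) s.charpoly = 0 := by
    have : aeval a s.charpoly = 0 := Subtype.ext <| by
      rw [aeval_subalgebra_coe, s.aeval_self_charpoly, ZeroMemClass.coe_zero]
    rw [aeval_algHom_apply, this, map_zero]
  have charpoly_eq : s.charpoly = minpoly k (invtSubalgebra.restrict N a) :=
    minpoly.eq_of_irreducible_of_monic hs aeval_restrict s.charpoly_monic
  refine Submodule.eq_top_of_finrank_eq (N.finrank_le.antisymm ?_)
  calc finrank k M = (minpoly k (invtSubalgebra.restrict N a)).natDegree := by
        rw [← charpoly_eq, s.charpoly_natDegree]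
    _ ≤ (invtSubalgebra.restrict N a).charpoly.natDegree :=
        natDegree_le_of_dvd (LinearMap.minpoly_dvd_charpoly _) (LinearMap.charpoly_monic _).ne_zero
    _ = finrank k N := LinearMap.charpoly_natDegree _

theorem eq_of_commute_of_irreducible_charpoly (hs : Irreducible s.charpoly) {g : Module.End k M}
    (hgs : Commute g s) {x : M} (hx : x ≠ 0) (hgx : g x = s x) : g = s := by
  have invt : LinearMap.eqLocus g s ∈ s.invtSubmodule := fun y (hy : g y = s y) =>
    calc g (s y) = s (g y) := LinearMap.congr_fun hgs.eq y
      _ = s (s y) := congrArg s hy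
  rw [← LinearMap.eqLocus_eq_top]
  exact eq_top_of_irreducible_charpoly hs invt ((Submodule.ne_bot_iff _).mpr ⟨x, hgx, hx⟩)

variable {A : Subalgebra k (Module.End k M)}

theorem isSimpleModule_of_irreducible_charpoly (hs : Irreducible s.charpoly) (hsA : s ∈ A) :
    IsSimpleModule A M where
  toNontrivial := by
    have := nontrivial_of_irreducible_charpoly hs
    infer_instance
  eq_bot_or_eq_top N := or_iff_not_imp_left.mpr fun hN =>
    (Submodule.restrictScalars_eq_top_iff k A M).mp <| eq_top_of_irreducible_charpoly hs
      (fun _ hx => N.smul_mem ⟨s, hsA⟩ hx) (mt (Submodule.restrictScalars_eq_bot_iff k A M).mp hN)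

theorem commute_of_finrank_moduleEnd_eq_one (hs : Irreducible s.charpoly) (hsA : s ∈ A)
    (h : finrank (Module.End A M) M = 1) {t : Module.End k M} (ht : t ∈ A) : Commute s t := by
  classical
  have := nontrivial_of_irreducible_charpoly hs
  have := isSimpleModule_of_irreducible_charpoly hs hsA
  obtain ⟨x, hx⟩ := exists_ne (0 : M)
  obtain ⟨g, hgx⟩ := (finrank_eq_one_iff_of_nonzero' (K := Module.End A M) x hx).mp h (s x)
  have commute_g {a : Module.End k M} (ha : a ∈ A) : Commute (g.restrictScalars k) a :=
    LinearMap.ext fun y => g.map_smul ⟨a, ha⟩ y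
  have hgs : g.restrictScalars k = s :=
    eq_of_commute_of_irreducible_charpoly hs (commute_g hsA) hx hgx
  exact hgs ▸ commute_g ht

theorem commute_of_irreducible_charpoly_of_coprime {F V : Type*} [DivisionRing F] [AddCommGroup V]
    [Module F V] (hs : Irreducible s.charpoly) (hsA : s ∈ A) (ρ : A →+* Module.End F V)
    (h : Nat.Coprime (finrank k M) (finrank F V)) {t : Module.End k M} (ht : t ∈ A) :
    Commute s t := by
  have := isSimpleModule_of_irreducible_charpoly hs hsA
  have : Module.Finite (Module.End A M) M := .of_restrictScalars_finite k _ M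
  refine commute_of_finrank_moduleEnd_eq_one hs hsA (Nat.eq_one_of_dvd_coprimes h ?_ ?_) ht
  · exact finrank_moduleEnd_dvd_finrank_of_ringHom (A.val : A →+* Module.End k M)
  · exact finrank_moduleEnd_dvd_finrank_of_ringHom ρ

end IrreducibleCharpoly

theorem matrix_commute_of_irreducible_charpoly_of_coprime {n k F : Type*} [Fintype n]
    [DecidableEq n] [Field k] [Field F] [Algebra k F] {S T : Matrix n n k}
    (hS : Irreducible S.charpoly) {V : Submodule F (n → F)}
    (hSV : ∀ v ∈ V, S.map (algebraMap k F) *ᵥ v ∈ V)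
    (hTV : ∀ v ∈ V, T.map (algebraMap k F) *ᵥ v ∈ V)
    (h : Nat.Coprime (Fintype.card n) (finrank F V)) : Commute S T := by
  let φ : Module.End k (n → k) →ₐ[k] Module.End F (n → F) :=
    (Matrix.toLinAlgEquiv'.toAlgHom.restrictScalars k).comp
      ((Algebra.ofId k F).mapMatrix.comp LinearMap.toMatrixAlgEquiv'.toAlgHom)
  have φ_apply (X : Matrix n n k) (v : n → F) :
      φ (Matrix.toLinAlgEquiv' X) v = X.map (algebraMap k F) *ᵥ v := by
    simp [φ, Algebra.ofId]
  let A : Subalgebra k (Module.End k (n → k)) := ((invtSubalgebra V).restrictScalars k).comap φ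
  let ρ : A →+* Module.End F V := (invtSubalgebra.restrict V : _ →+* Module.End F V).comp
    ((φ.comp A.val : A →+* Module.End F (n → F)).codRestrict (invtSubalgebra V) fun a => a.2)
  have mem_A {X : Matrix n n k} (hX : ∀ v ∈ V, X.map (algebraMap k F) *ᵥ v ∈ V) :
      Matrix.toLinAlgEquiv' X ∈ A := fun v hv =>
    show φ _ v ∈ V from (φ_apply X v).symm ▸ hX v hv
  refine Commute.of_map (f := Matrix.toLinAlgEquiv') (AlgEquiv.injective _) ?_
  refine commute_of_irreducible_charpoly_of_coprime ?_ (mem_A hSV) ρ ?_ (mem_A hTV)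
  · exact (Matrix.charpoly_toLin S (Pi.basisFun k n)).symm ▸ hS
  · rwa [finrank_fintype_fun_eq_card]

theorem mulVec_mem_weakStableSubspace {d : ℕ} (A : Matrix (Fin d) (Fin d) ℤ) :
    ∀ v ∈ weakStableSubspace d A, A.map (Int.cast : ℤ → ℝ) *ᵥ v ∈ weakStableSubspace d A := by
  change weakStableSubspace d A ≤
    (weakStableSubspace d A).comap (A.map (Int.cast : ℤ → ℝ)).mulVecLin
  refine Submodule.span_le.mpr ?_
  rintro v ⟨C, hC⟩
  refine Submodule.subset_span ⟨C, fun n => ?_⟩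
  rw [Matrix.mulVecLin_apply, Matrix.mulVec_mulVec, ← pow_succ]
  exact hC (n + 1)

theorem equal_weak_stable_coprime_implies_commute_general
    (d : ℕ) (S T : Matrix (Fin d) (Fin d) ℤ)
    (hS : Irreducible (S.map (Int.cast : ℤ → ℚ)).charpoly)
    (heq : weakStableSubspace d S = weakStableSubspace d T)
    (hgcd : Nat.gcd d (finrank ℝ (weakStableSubspace d S)) = 1) :
    S * T = T * S := by
  have map_map (X : Matrix (Fin d) (Fin d) ℤ) : (X.map (Int.cast : ℤ → ℚ)).map (algebraMap ℚ ℝ) =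
      X.map (Int.cast : ℤ → ℝ) := by
    ext i j
    simp
  refine Commute.of_map (f := (Int.castRingHom ℚ).mapMatrix)
    (Matrix.map_injective Int.cast_injective) ?_
  refine matrix_commute_of_irreducible_charpoly_of_coprime (F := ℝ) (V := weakStableSubspace d S)
    hS ?_ ?_ (by rwa [Fintype.card_fin])
  · exact (map_map S).symm ▸ mulVec_mem_weakStableSubspace S
  · exact (map_map T).symm ▸ heq ▸ mulVec_mem_weakStableSubspace T

/-- Totally irreducible toral automorphisms `S, T` with equal weak stable
subspaces whose dimension is coprime to `d` must commute. -/
theorem equal_weak_stable_coprime_implies_commute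
    (d : ℕ) (S T : Matrix (Fin d) (Fin d) ℤ)
    (hSu : IsUnit S.det) (hTu : IsUnit T.det)
    (hSirr : ∀ n : ℕ, 0 < n → Irreducible (((S ^ n).map (Int.cast : ℤ → ℚ)).charpoly))
    (hTirr : ∀ n : ℕ, 0 < n → Irreducible (((T ^ n).map (Int.cast : ℤ → ℚ)).charpoly))
    (heq : weakStableSubspace d S = weakStableSubspace d T)
    (hpos : 0 < Module.finrank ℝ (weakStableSubspace d S))
    (hlt : Module.finrank ℝ (weakStableSubspace d S) < d)
    (hgcd : Nat.gcd d (Module.finrank ℝ (weakStableSubspace d S)) = 1) :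
    S * T = T * S :=
  equal_weak_stable_coprime_implies_commute_general d S T (by simpa using hSirr 1 one_pos) heq hgcd
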